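/- Let F be a CPLIFS with attractor Λ whose generated self-similar IFS has no exact overlapping (so that F is limit-irreducible), and let s ∈ (0, dim_H Λ), where dim_H denotes Hausdorff dimension. Then for every ε > 0 there exists δ > 0 such that every CPLIFS F̂ that is δ-close to F satisfies Φ(s) − ε < Φ̂(s), where Φ and Φ̂ are the natural pressure functions of F and F̂. -/

import Mathlib

open Set Filter MeasureTheory

noncomputable section

/-- Composition `f_{i₁} ∘ ⋯ ∘ f_{iₙ}` of a family of maps of `ℝ` along a finite word
(the empty composition being the identity). -/
def compFam {ι : Type*} (S : ι → ℝ → ℝ) (w : List ι) : ℝ → ℝ :=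
  w.foldr (fun k g => S k ∘ g) id

/-- A family of maps of `ℝ` has *no exact overlapping* if for every `n ≥ 1` and all words
`ī, j̄` of length `n`, equality of the compositions `S_ī = S_j̄` (as functions) implies
`ī = j̄`. -/
def NoExactOverlap {ι : Type*} (S : ι → ℝ → ℝ) : Prop :=
  ∀ n : ℕ, 1 ≤ n → ∀ i j : Fin n → ι,
    compFam S (List.ofFn i) = compFam S (List.ofFn j) → i = j

/-- The supporting interval `I` of the system `{f_1, …, f_m}`:  if the maps have a common
fixed point `φ` (i.e. the attractor is the single point `φ`) it is `[φ - 1/2, φ + 1/2]`;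
otherwise it is the smallest nonempty compact interval sent into itself by all the maps,
i.e. the intersection of all such intervals. -/
def suppInt {m : ℕ} (f : Fin m → ℝ → ℝ) : Set ℝ :=
  haveI := Classical.propDecidable (∃ φ : ℝ, ∀ k, f k φ = φ)
  if h : ∃ φ : ℝ, ∀ k, f k φ = φ then
    Set.Icc (h.choose - 1 / 2) (h.choose + 1 / 2)
  else
    ⋂₀ {J : Set ℝ | J.Nonempty ∧ (∃ a b : ℝ, J = Set.Icc a b) ∧ ∀ k, f k '' J ⊆ J}

/-- The natural pressure function
`Φ(s) = limsup_{n → ∞} (1/n) log ∑_{(i₁,…,iₙ)} |I_{i₁…iₙ}|ˢ`,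
where `I_{i₁…iₙ} = f_{i₁} ∘ ⋯ ∘ f_{iₙ} (I)` are the cylinder intervals and `|·|` denotes
the length (diameter) of an interval. -/
def pressure {m : ℕ} (f : Fin m → ℝ → ℝ) (s : ℝ) : ℝ :=
  Filter.limsup
    (fun n : ℕ =>
      (n : ℝ)⁻¹ * Real.log (∑ w : Fin n → Fin m,
        Metric.diam (compFam f (List.ofFn w) '' suppInt f) ^ s))
    Filter.atTop

/-- A continuous piecewise linear iterated function system (CPLIFS) consisting of `m ≥ 2`
continuous piecewise linear maps `f k : ℝ → ℝ`; the map `f k` has the `l k` breaking points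
`b k 0 < … < b k (l k - 1)` and on the `i`-th open interval of linearity determined by them
it coincides with the affine map `x ↦ ρ k i * x + t k i`, where the slopes satisfy
`0 < |ρ k i| < 1` and consecutive slopes of each map are distinct. -/
structure CPLIFS (m : ℕ) (l : Fin m → ℕ) : Type where
  f : Fin m → ℝ → ℝ
  b : (k : Fin m) → Fin (l k) → ℝ
  ρ : (k : Fin m) → Fin (l k + 1) → ℝ
  t : (k : Fin m) → Fin (l k + 1) → ℝ
  hm : 2 ≤ m
  hb : ∀ k, StrictMono (b k)
  hρ0 : ∀ k i, ρ k i ≠ 0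
  hρ1 : ∀ k i, |ρ k i| < 1
  hconsec : ∀ k (i : Fin (l k)), ρ k i.castSucc ≠ ρ k i.succ
  hcont : ∀ k, Continuous (f k)
  haff : ∀ (k : Fin m) (i : Fin (l k + 1)) (x : ℝ),
    (∀ j : Fin (l k), (j : ℕ) < (i : ℕ) → b k j < x) →
    (∀ j : Fin (l k), (i : ℕ) ≤ (j : ℕ) → x < b k j) →
    f k x = ρ k i * x + t k i

namespace CPLIFS

variable {m : ℕ} {l : Fin m → ℕ}

/-- The index set of the affine pieces of a CPLIFS. -/
abbrev Idx (m : ℕ) (l : Fin m → ℕ) := Σ k : Fin m, Fin (l k + 1)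

/-- The self-similar IFS generated by a CPLIFS: the family of affine maps
`S_{k,i} x = ρ_{k,i} x + t_{k,i}` coinciding with `f k` on its `i`-th interval of
linearity. -/
def S (F : CPLIFS m l) (p : Idx m l) : ℝ → ℝ :=
  fun x => F.ρ p.1 p.2 * x + F.t p.1 p.2

/-- The supporting interval of a CPLIFS. -/
def supp (F : CPLIFS m l) : Set ℝ := suppInt F.f

/-- `𝓘 = f_1(I) ∪ … ∪ f_m(I)`. -/
def bigI (F : CPLIFS m l) : Set ℝ := ⋃ k, F.f k '' F.supp

/-- The `i`-th open interval of linearity of `f k`. -/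
def J (F : CPLIFS m l) (k : Fin m) (i : Fin (l k + 1)) : Set ℝ :=
  {x : ℝ | (∀ j : Fin (l k), (j : ℕ) < (i : ℕ) → F.b k j < x) ∧
           (∀ j : Fin (l k), (i : ℕ) ≤ (j : ℕ) → x < F.b k j)}

/-- The set of critical points of a CPLIFS: the `f k`-images of the endpoints of `I` and of
the breaking points, together with the points of `𝓘` at which two different branches
(local inverses of affine pieces) agree. -/
def crit (F : CPLIFS m l) : Set ℝ :=
  (⋃ k, ({F.f k (sInf F.supp), F.f k (sSup F.supp)} : Set ℝ)) ∪
  (⋃ k, ⋃ j : Fin (l k), ({F.f k (F.b k j)} : Set ℝ)) ∪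
  {x ∈ F.bigI | ∃ p q : Idx m l, p ≠ q ∧
      x ∈ F.f p.1 '' F.J p.1 p.2 ∧ x ∈ F.f q.1 '' F.J q.1 q.2 ∧
      (x - F.t p.1 p.2) / F.ρ p.1 p.2 = (x - F.t q.1 q.2) / F.ρ q.1 q.2}

/-- `Z : Fin N → ℝ × ℝ` is an (ordered) monotonicity partition of the CPLIFS `F` if the
closed intervals `[Z i .1, Z i .2]` are nondegenerate, ordered, cover `𝓘`, their endpoints
are critical points, and their interiors contain no critical point. -/
def IsMonoPartition (F : CPLIFS m l) (N : ℕ) (Z : Fin N → ℝ × ℝ) : Prop :=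
  (∀ i, (Z i).1 < (Z i).2) ∧
  (∀ i j : Fin N, i < j → (Z i).2 ≤ (Z j).1) ∧
  (⋃ i, Set.Icc (Z i).1 (Z i).2) = F.bigI ∧
  (∀ i, (Z i).1 ∈ F.crit ∧ (Z i).2 ∈ F.crit) ∧
  (∀ i, Set.Ioo (Z i).1 (Z i).2 ∩ F.crit = ∅)

/-- Two CPLIFSs (necessarily with the same number of maps and the same numbers of breaking
points) are ε-close if (a) their monotonicity partitions have the same cardinality and
corresponding intervals have endpoints within ε, (c) the logarithms of the absolute values
of corresponding slopes differ by less than ε, and (d) `sup_x |f_k x - g_k x| < ε`. -/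
def Close (ε : ℝ) (F G : CPLIFS m l) : Prop :=
  (∃ (N : ℕ) (Z W : Fin N → ℝ × ℝ), F.IsMonoPartition N Z ∧ G.IsMonoPartition N W ∧
      ∀ i, |(Z i).1 - (W i).1| < ε ∧ |(Z i).2 - (W i).2| < ε) ∧
  (∀ k i, abs (Real.log |F.ρ k i| - Real.log |G.ρ k i|) < ε) ∧
  (∀ k x, |F.f k x - G.f k x| < ε)

end CPLIFS

/-!
Suppose that a composition whose first applied map is `f k` fixes a break point of `f k`. Lifting
it to the generated self-similar system with either of the two affine pieces of `f k` that meet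
there gives two distinct words of affine maps with a common fixed point. These commute, which is an
exact overlap. So no break point returns to itself, and by compactness it does not return close to
itself in at most `N` steps, uniformly in the word. Hence, along any word, the small cylinders come
close to a break point at a rate of at most `θ` per letter, with `θ` as small as we please.

If `G` is close to `F`, then so are its break points, since a kink of `f k` is visible in its second
differences. Away from the break points, a letter thus multiplies the lengths of the cylinders of
`F` and `G` by almost the same slope; at the rare remaining letters the ratio of these lengths grows
at most by a fixed factor. Therefore `log |I_w| ≤ log |Î_w| + C + ε |w|` for all words `w`, and the
pressures compare accordingly.
-/

open Metric
open scoped NNReal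

lemma eventually_nhdsGT_mul_lt (a : ℝ) {c : ℝ} (hc : 0 < c) :
    ∀ᶠ r in nhdsWithin 0 (Ioi 0), a * r < c := by
  have hlim : Tendsto (fun r : ℝ ↦ a * r) (nhds 0) (nhds 0) := by
    simpa using (tendsto_id (x := nhds (0 : ℝ))).const_mul a
  exact nhdsWithin_le_nhds (hlim.eventually_lt_const hc)

section CountingSuffixes

variable {α : Type*}

lemma countP_le_countP_add_sum_countP {ι : Type*} [Fintype ι] {p p₀ : α → Prop}
    {q : ι → α → Prop} [DecidablePred p] [DecidablePred p₀] [∀ i, DecidablePred (q i)]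
    (h : ∀ a, p a → p₀ a ∨ ∃ i, q i a) (L : List α) :
    L.countP (p ·) ≤ L.countP (p₀ ·) + ∑ i, L.countP (q i ·) := by
  induction L with
  | nil => simp
  | cons a L ih =>
    have hhead : (if p a then 1 else 0) ≤
        (if p₀ a then 1 else 0) + ∑ i, if q i a then 1 else 0 := by
      by_cases hp : p a
      · rcases h a hp with h₀ | ⟨i, hi⟩
        · simp [hp, h₀]
        · have := Finset.single_le_sum (f := fun i ↦ if q i a then 1 else 0)
            (fun _ _ ↦ Nat.zero_le _) (Finset.mem_univ i)
          simp only [hi, if_true] at this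
          simp only [hp, if_true]
          omega
      · simp [hp]
    simp only [List.countP_cons, decide_eq_true_eq, Finset.sum_add_distrib]
    omega

lemma countP_length_lt_tails (n : ℕ) (w : List α) :
    w.tails.countP (·.length < n) = min n (w.length + 1) := by
  induction w with
  | nil => rcases n with _ | n <;> simp
  | cons k w ih =>
    rw [List.tails_cons, List.countP_cons, ih, List.length_cons]
    by_cases h : w.length + 1 < n <;> simp only [h, decide_true, decide_false, if_true] <;> grind

lemma countP_tails_mul_le {P : List α → Prop} [DecidablePred P] {N : ℕ}
    (hgap : ∀ u v, P u → P v → u <:+ v → u ≠ v → u.length + N ≤ v.length) (w : List α) :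
    w.tails.countP (P ·) * N ≤ w.length + N := by
  have longest : ∀ w : List α, w.tails.countP (P ·) = 0 ∨
      ∃ u, u <:+ w ∧ P u ∧ w.tails.countP (P ·) * N ≤ u.length + N := by
    intro w
    induction w with
    | nil =>
      by_cases hP : P []
      · exact .inr ⟨[], List.suffix_rfl, hP, by simp [hP]⟩
      · exact .inl (by simp [hP])
    | cons k w ih =>
      simp only [List.tails_cons, List.countP_cons, decide_eq_true_eq]
      by_cases hP : P (k :: w)
      · refine .inr ⟨k :: w, List.suffix_rfl, hP, ?_⟩
        rcases ih with h | ⟨u, hsuf, hu, hle⟩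
        · simp [hP, h]
        · have := hgap u (k :: w) hu hP (hsuf.trans (List.suffix_cons k w)) fun h ↦ by
            simpa [h] using hsuf.length_le
          simp only [hP, if_true, add_mul, one_mul]
          omega
      · simp only [hP, if_false, add_zero]
        exact ih.imp_right fun ⟨u, hsuf, hu, hle⟩ ↦
          ⟨u, hsuf.trans (List.suffix_cons k w), hu, hle⟩
  rcases longest w with h | ⟨u, hsuf, -, hle⟩
  · simp [h]
  · exact hle.trans (by grw [hsuf.length_le])

lemma le_add_mul_countP_tails {P : List α → Prop} [DecidablePred P] {φ : List α → ℝ} {δ b : ℝ}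
    (hb : 0 ≤ b) (hφ : ∀ k w, φ (k :: w) ≤ φ w + δ + if P (k :: w) then b else 0)
    (w : List α) :
    φ w ≤ φ [] + δ * w.length + b * w.tails.countP (P ·) := by
  induction w with
  | nil => exact le_add_of_le_of_nonneg (by simp) (by positivity)
  | cons k w ih =>
    have hstep := hφ k w
    by_cases hP : P (k :: w) <;>
      simp only [hP, if_true, if_false, add_zero] at hstep <;>
      simp only [hP, List.tails_cons, List.countP_cons, List.length_cons, decide_true, decide_false,
        if_true, Bool.false_eq_true, if_false] <;>
      push_cast <;> linarith

end CountingSuffixes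

section Compositions

variable {ι : Type*} {S T : ι → ℝ → ℝ}

lemma compFam_append (S : ι → ℝ → ℝ) (u v : List ι) (x : ℝ) :
    compFam S (u ++ v) x = compFam S u (compFam S v x) := by
  induction u with
  | nil => rfl
  | cons k u ih => exact congrArg (S k) ih

lemma image_compFam_cons (S : ι → ℝ → ℝ) (k : ι) (w : List ι) (A : Set ℝ) :
    compFam S (k :: w) '' A = S k '' (compFam S w '' A) :=
  image_comp (S k) (compFam S w) A

lemma lipschitzWith_compFam {K : ℝ≥0} (hS : ∀ k, LipschitzWith K (S k)) (w : List ι) :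
    LipschitzWith (K ^ w.length) (compFam S w) := by
  induction w with
  | nil => exact LipschitzWith.id
  | cons k w ih => rw [List.length_cons, pow_succ']; exact (hS k).comp ih

lemma dist_compFam_le {K : ℝ≥0} (hK : K < 1) (hS : ∀ k, LipschitzWith K (S k)) {δ : ℝ}
    (hδ : 0 ≤ δ) (hST : ∀ k x, dist (S k x) (T k x) ≤ δ) (w : List ι) (x y : ℝ) :
    dist (compFam S w x) (compFam T w y) ≤ K ^ w.length * dist x y + δ / (1 - K) := by
  have hK' : (0 : ℝ) < 1 - K := sub_pos.2 (mod_cast hK)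
  induction w with
  | nil => simpa [compFam] using div_nonneg hδ hK'.le
  | cons k w ih =>
    calc dist (S k (compFam S w x)) (T k (compFam T w y))
        ≤ dist (S k (compFam S w x)) (S k (compFam T w y)) + δ :=
          (dist_triangle _ (S k (compFam T w y)) _).trans (by grw [hST k (compFam T w y)])
      _ ≤ K * (K ^ w.length * dist x y + δ / (1 - K)) + δ := by grw [(hS k).dist_le_mul, ih]
      _ = K ^ (k :: w).length * dist x y + δ / (1 - K) := by
          rw [List.length_cons]; field_simp; ring

lemma exists_image_compFam_subset_closedBall {K : ℝ≥0} (hK : K < 1)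
    (hS : ∀ k, LipschitzWith K (S k)) {δ r : ℝ} (hδ : 0 ≤ δ)
    (hST : ∀ k x, dist (S k x) (T k x) ≤ δ) (hr : δ / (1 - K) < r) {B : Set ℝ}
    (hB : Bornology.IsBounded B) (x₀ : ℝ) :
    ∃ n₀, ∀ w : List ι, n₀ ≤ w.length →
      compFam T w '' B ⊆ closedBall (compFam S w x₀) r := by
  obtain ⟨M, hM⟩ := hB.subset_closedBall x₀
  have hlim : Tendsto (fun n : ℕ ↦ (K : ℝ) ^ n * M) atTop (nhds 0) := by
    simpa using (tendsto_pow_atTop_nhds_zero_of_lt_one K.coe_nonneg (mod_cast hK)).mul_const M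
  obtain ⟨n₀, hn₀⟩ := eventually_atTop.1 (hlim.eventually_lt_const (sub_pos.2 hr))
  refine ⟨n₀, fun w hw ↦ image_subset_iff.2 fun y hy ↦ ?_⟩
  rw [mem_preimage, mem_closedBall']
  calc dist (compFam S w x₀) (compFam T w y)
      ≤ K ^ w.length * dist x₀ y + δ / (1 - K) := dist_compFam_le hK hS hδ hST w x₀ y
    _ ≤ K ^ w.length * M + δ / (1 - K) := by grw [mem_closedBall'.1 (hM hy)]
    _ ≤ r := by linarith [hn₀ _ hw]

lemma NoExactOverlap.eq_of_compFam_eq (hS : NoExactOverlap S) {u v : List ι}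
    (hlen : u.length = v.length) (h : compFam S u = compFam S v) : u = v := by
  obtain ⟨⟨n, i⟩, rfl⟩ := List.equivSigmaTuple.symm.surjective u
  obtain ⟨⟨n', j⟩, rfl⟩ := List.equivSigmaTuple.symm.surjective v
  obtain rfl : n = n' := by simpa [List.equivSigmaTuple] using hlen
  rcases n.eq_zero_or_pos with rfl | hn
  · simp [List.equivSigmaTuple]
  · rw [hS n hn i j h]

lemma exists_compFam_eq_affine (hS : ∀ k, ∃ a b, ∀ x, S k x = a * x + b) (w : List ι) :
    ∃ a b, ∀ x, compFam S w x = a * x + b := by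
  induction w with
  | nil => exact ⟨1, 0, fun x ↦ by simp [compFam]⟩
  | cons k w ih =>
    obtain ⟨a, b, hw⟩ := ih
    obtain ⟨a', b', hk⟩ := hS k
    refine ⟨a' * a, a' * b + b', fun x ↦ ?_⟩
    change S k (compFam S w x) = _
    rw [hk, hw]
    ring

lemma NoExactOverlap.eq_of_common_fixedPoint (hno : NoExactOverlap S)
    (hS : ∀ k, ∃ a b, ∀ x, S k x = a * x + b) {u v : List ι} (hlen : u.length = v.length)
    {p : ℝ} (hu : compFam S u p = p) (hv : compFam S v p = p) : u = v := by
  obtain ⟨a, b, hab⟩ := exists_compFam_eq_affine hS u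
  obtain ⟨a', b', hab'⟩ := exists_compFam_eq_affine hS v
  -- Affine maps of the line with a common fixed point commute.
  have hcomm : compFam S (u ++ v) = compFam S (v ++ u) := by
    funext x
    rw [hab] at hu
    rw [hab'] at hv
    simp only [compFam_append, hab, hab']
    linear_combination (a - 1) * hv - (a' - 1) * hu
  exact (List.append_inj (hno.eq_of_compFam_eq (by simp [add_comm]) hcomm) hlen).1

end Compositions

section SupportingInterval

variable {m : ℕ} {f : Fin m → ℝ → ℝ} {K : ℝ≥0}

lemma fixedPoint_mem_of_mapsTo {α : Type*} [MetricSpace α] [CompleteSpace α]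
    {g : α → α} (hg : ContractingWith K g) {A : Set α} (hA : IsClosed A) {x₀ : α} (hx₀ : x₀ ∈ A)
    (hmaps : MapsTo g A A) : haveI := Nonempty.intro x₀; hg.fixedPoint g ∈ A :=
  haveI := Nonempty.intro x₀
  hA.mem_of_tendsto (hg.tendsto_iterate_fixedPoint x₀)
    (Eventually.of_forall fun n ↦ hmaps.iterate n hx₀)

lemma exists_Icc_mapsTo (hK : K < 1) (hf : ∀ k, LipschitzWith K (f k)) :
    ∃ R, 0 ≤ R ∧ ∀ k, MapsTo (f k) (Icc (-R) R) (Icc (-R) R) := by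
  have hK' : (0 : ℝ) < 1 - K := sub_pos.2 (mod_cast hK)
  have hsum : 0 ≤ ∑ k, |f k 0| := Finset.sum_nonneg fun _ _ ↦ abs_nonneg _
  set R := (∑ k, |f k 0|) / (1 - K) with hR
  refine ⟨R, div_nonneg hsum hK'.le, fun k x hx ↦ abs_le.1 ?_⟩
  calc |f k x| ≤ |f k x - f k 0| + |f k 0| := by simpa using abs_add_le (f k x - f k 0) (f k 0)
    _ ≤ K * |x - 0| + ∑ k, |f k 0| := by
        gcongr
        · exact (hf k).dist_le_mul x 0
        · exact Finset.single_le_sum (f := fun k ↦ |f k 0|) (fun _ _ ↦ abs_nonneg _)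
            (Finset.mem_univ k)
    _ ≤ K * R + (1 - K) * R := by
        rw [sub_zero, hR, mul_div_cancel₀ _ hK'.ne']
        gcongr
        exact abs_le.2 hx
    _ = R := by ring

lemma exists_suppInt_eq_Icc (hK : K < 1) (hf : ∀ k, LipschitzWith K (f k)) :
    ∃ α β, α < β ∧ suppInt f = Icc α β := by
  unfold suppInt
  split_ifs with hfix
  · exact ⟨_, _, by linarith, rfl⟩
  obtain ⟨k₀⟩ : Nonempty (Fin m) := not_isEmpty_iff.1 fun _ ↦ hfix ⟨0, isEmptyElim⟩
  have hcontr (k) : ContractingWith K (f k) := ⟨hK, hf k⟩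
  set 𝒥 := {J : Set ℝ | J.Nonempty ∧ (∃ a b : ℝ, J = Icc a b) ∧ ∀ k, f k '' J ⊆ J}
  have hfixed (k) : (hcontr k).fixedPoint ∈ ⋂₀ 𝒥 := by
    rintro _ ⟨⟨x₀, hx₀⟩, ⟨a, b, rfl⟩, hinv⟩
    exact fixedPoint_mem_of_mapsTo (hcontr k) isClosed_Icc hx₀ (image_subset_iff.1 (hinv k))
  obtain ⟨R, hR, hmaps⟩ := exists_Icc_mapsTo hK hf
  have hmem : Icc (-R) R ∈ 𝒥 :=
    ⟨⟨0, by simpa using hR⟩, ⟨_, _, rfl⟩, fun k ↦ (hmaps k).image_subset⟩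
  have hclosed : IsClosed (⋂₀ 𝒥) :=
    isClosed_sInter (by rintro _ ⟨-, ⟨a, b, rfl⟩, -⟩; exact isClosed_Icc)
  have hord : OrdConnected (⋂₀ 𝒥) :=
    ordConnected_sInter (by rintro _ ⟨-, ⟨a, b, rfl⟩, -⟩; exact ordConnected_Icc)
  have hIcc := eq_Icc_of_connected_compact ⟨⟨_, hfixed k₀⟩, hord.isPreconnected⟩
    (isCompact_Icc.of_isClosed_subset hclosed (sInter_subset_of_mem hmem))
  refine ⟨_, _, not_le.1 fun hle ↦ hfix ⟨(hcontr k₀).fixedPoint, fun k ↦ ?_⟩, hIcc⟩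
  have hsub := subsingleton_Icc_of_ge hle
  rw [← hIcc] at hsub
  rw [hsub (hfixed k₀) (hfixed k)]
  exact (hcontr k).fixedPoint_isFixedPt

end SupportingInterval

section Pressure

variable {m : ℕ} {f g : Fin m → ℝ → ℝ} {s : ℝ}

/-- The cylinder interval `I_w = f_w(I)` of the word `w`. -/
def cylInterval (f : Fin m → ℝ → ℝ) (w : List (Fin m)) : Set ℝ :=
  compFam f w '' suppInt f

/-- The length `|I_w|` of the cylinder interval of the word `w`. -/
def cylLen (f : Fin m → ℝ → ℝ) (w : List (Fin m)) : ℝ :=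
  diam (cylInterval f w)

/-- The sum `∑_{|w| = n} |I_w|^s` whose exponential growth rate is the pressure. -/
def partitionSum (f : Fin m → ℝ → ℝ) (s : ℝ) (n : ℕ) : ℝ :=
  ∑ w : Fin n → Fin m, cylLen f (List.ofFn w) ^ s

lemma partitionSum_pos [NeZero m] (hf : ∀ w, 0 < cylLen f w) (s : ℝ) (n : ℕ) :
    0 < partitionSum f s n :=
  Finset.sum_pos (fun _ _ ↦ Real.rpow_pos_of_pos (hf _) s) Finset.univ_nonempty

lemma log_partitionSum_le_add [NeZero m] (hf : ∀ w, 0 < cylLen f w) (hg : ∀ w, 0 < cylLen g w)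
    (hs : 0 ≤ s) {C : ℝ} {n : ℕ}
    (h : ∀ w : List (Fin m), w.length = n →
      Real.log (cylLen f w) ≤ Real.log (cylLen g w) + C) :
    Real.log (partitionSum f s n) ≤ Real.log (partitionSum g s n) + s * C := by
  rw [← sub_le_iff_le_add', ← Real.log_div (partitionSum_pos hf s n).ne'
    (partitionSum_pos hg s n).ne', Real.log_le_iff_le_exp
    (div_pos (partitionSum_pos hf s n) (partitionSum_pos hg s n)),
    div_le_iff₀ (partitionSum_pos hg s n), partitionSum, partitionSum, Finset.mul_sum]
  refine Finset.sum_le_sum fun w _ ↦ ?_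
  rw [Real.rpow_def_of_pos (hf _), Real.rpow_def_of_pos (hg _), ← Real.exp_add, Real.exp_le_exp]
  linarith [mul_le_mul_of_nonneg_left (h _ (List.length_ofFn (f := w))) hs]

lemma log_partitionSum_le [NeZero m] (hf : ∀ w, 0 < cylLen f w) (hs : 0 ≤ s) {B : ℝ}
    (hB : ∀ w, cylLen f w ≤ B) (n : ℕ) :
    Real.log (partitionSum f s n) ≤ n * Real.log m + s * Real.log B := by
  have hB0 : 0 < B := (hf []).trans_le (hB [])
  have hm : (0 : ℝ) < m := mod_cast NeZero.pos m
  have hle : partitionSum f s n ≤ m ^ n * B ^ s := by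
    calc partitionSum f s n ≤ ∑ _w : Fin n → Fin m, B ^ s :=
          Finset.sum_le_sum fun w _ ↦ Real.rpow_le_rpow (hf _).le (hB _) hs
      _ = m ^ n * B ^ s := by simp
  calc Real.log (partitionSum f s n) ≤ Real.log (m ^ n * B ^ s) :=
        Real.log_le_log (partitionSum_pos hf s n) hle
    _ = n * Real.log m + s * Real.log B := by
        rw [Real.log_mul (by positivity) (by positivity), Real.log_pow, Real.log_rpow hB0]

lemma le_log_partitionSum [NeZero m] (hf : ∀ w, 0 < cylLen f w) (hs : 0 ≤ s) {n : ℕ} {L : ℝ}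
    (hL : ∀ w : List (Fin m), w.length = n → L ≤ Real.log (cylLen f w)) :
    s * L ≤ Real.log (partitionSum f s n) := by
  rw [Real.le_log_iff_exp_le (partitionSum_pos hf s n)]
  let w : Fin n → Fin m := 0
  calc Real.exp (s * L) ≤ cylLen f (List.ofFn w) ^ s := by
        rw [Real.rpow_def_of_pos (hf _), Real.exp_le_exp, mul_comm]
        exact mul_le_mul_of_nonneg_right (hL _ List.length_ofFn) hs
    _ ≤ partitionSum f s n :=
        Finset.single_le_sum (f := fun w : Fin n → Fin m ↦ cylLen f (List.ofFn w) ^ s)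
          (fun w _ ↦ Real.rpow_nonneg (hf _).le s) (Finset.mem_univ w)

lemma tendsto_inv_mul_natCast_mul_add (A B : ℝ) :
    Tendsto (fun n : ℕ ↦ (n : ℝ)⁻¹ * (n * A + B)) atTop (nhds A) := by
  have hlim : Tendsto (fun n : ℕ ↦ A + B / n) atTop (nhds (A + 0)) :=
    tendsto_const_nhds.add (tendsto_const_div_atTop_nhds_zero_nat B)
  rw [add_zero] at hlim
  refine hlim.congr' ?_
  filter_upwards [eventually_ne_atTop 0] with n hn
  field_simp

lemma limsup_le_limsup_add_of_tendsto {ι : Type*} {φ : Filter ι} [φ.NeBot] {u v e : ι → ℝ} {c : ℝ}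
    (hu : IsBoundedUnder (· ≥ ·) φ u) (hv : IsBoundedUnder (· ≤ ·) φ v)
    (he : Tendsto e φ (nhds c)) (huv : ∀ i, u i ≤ v i + e i) :
    limsup u φ ≤ limsup v φ + c := by
  have hv' : IsBoundedUnder (· ≥ ·) φ v :=
    (isBoundedUnder_ge_add hu he.neg.isBoundedUnder_ge).mono_ge
      (Eventually.of_forall fun i ↦ by simpa [← sub_eq_add_neg] using huv i)
  calc limsup u φ ≤ limsup (v + e) φ := limsup_le_limsup (Eventually.of_forall huv)
        hu.isCoboundedUnder_le (isBoundedUnder_le_add hv he.isBoundedUnder_le)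
    _ ≤ limsup v φ + limsup e φ :=
        limsup_add_le hv' hv he.isBoundedUnder_ge.isCoboundedUnder_le he.isBoundedUnder_le
    _ = limsup v φ + c := by rw [he.limsup_eq]

lemma pressure_le_pressure_add_mul [NeZero m] (hs : 0 ≤ s) (hf : ∀ w, 0 < cylLen f w)
    (hg : ∀ w, 0 < cylLen g w) {L a : ℝ}
    (hL : ∀ w, L - a * w.length ≤ Real.log (cylLen f w)) {B : ℝ} (hB : ∀ w, cylLen g w ≤ B)
    {C κ : ℝ}
    (h : ∀ w, Real.log (cylLen f w) ≤ Real.log (cylLen g w) + (C + κ * w.length)) :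
    pressure f s ≤ pressure g s + s * κ := by
  have hinv (n : ℕ) : (0 : ℝ) ≤ (n : ℝ)⁻¹ := by positivity
  have hlower := (tendsto_inv_mul_natCast_mul_add (-(s * a)) (s * L)).isBoundedUnder_ge
  have hupper := (tendsto_inv_mul_natCast_mul_add (Real.log m) (s * Real.log B)).isBoundedUnder_le
  refine limsup_le_limsup_add_of_tendsto
    (hlower.mono_ge (Eventually.of_forall fun n ↦ mul_le_mul_of_nonneg_left ?_ (hinv n)))
    (hupper.mono_le (Eventually.of_forall fun n ↦
      mul_le_mul_of_nonneg_left (log_partitionSum_le hg hs hB n) (hinv n)))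
    (tendsto_inv_mul_natCast_mul_add (s * κ) (s * C)) fun n ↦ ?_
  · calc n * -(s * a) + s * L = s * (L - a * n) := by ring
      _ ≤ Real.log (partitionSum f s n) := le_log_partitionSum hf hs fun w hw ↦ hw ▸ hL w
  · rw [← mul_add]
    refine mul_le_mul_of_nonneg_left ?_ (hinv n)
    calc Real.log (partitionSum f s n)
        ≤ Real.log (partitionSum g s n) + s * (C + κ * n) :=
          log_partitionSum_le_add hf hg hs fun w hw ↦ hw ▸ h w
      _ = Real.log (partitionSum g s n) + (n * (s * κ) + s * C) := by ring

end Pressure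

section PiecewiseAffine

variable {n : ℕ} {b : Fin n → ℝ} {f g : ℝ → ℝ} {ρ t : Fin (n + 1) → ℝ}

/-- The `i`-th of the `n + 1` closed intervals into which the points `b 0 ≤ … ≤ b (n - 1)` divide
the line, with the indexing of `CPLIFS.haff`. -/
def closedPiece (b : Fin n → ℝ) (i : Fin (n + 1)) : Set ℝ :=
  {x | (∀ j : Fin n, (j : ℕ) < i → b j ≤ x) ∧ ∀ j : Fin n, (i : ℕ) ≤ j → x ≤ b j}

/-- `f` is the piecewise affine map with break points `b`, slopes `ρ` and intercepts `t`. Using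
closed pieces makes it continuous, since adjacent pieces share an end point. -/
def IsPiecewiseAffine (f : ℝ → ℝ) (b : Fin n → ℝ) (ρ t : Fin (n + 1) → ℝ) : Prop :=
  ∀ i, ∀ x ∈ closedPiece b i, f x = ρ i * x + t i

lemma exists_forall_le_and_forall_lt (hb : Monotone b) (x : ℝ) :
    ∃ i : Fin (n + 1),
      (∀ j : Fin n, (j : ℕ) < i → b j ≤ x) ∧ ∀ j : Fin n, (i : ℕ) ≤ j → x < b j := by
  have hex : ∃ i : ℕ, ∀ j : Fin n, i ≤ (j : ℕ) → x < b j := ⟨n, fun j hj ↦ by omega⟩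
  classical
  have hle : Nat.find hex ≤ n := Nat.find_min' hex fun j hj ↦ by omega
  refine ⟨⟨Nat.find hex, by omega⟩, fun j hj ↦ not_lt.1 fun hlt ↦ ?_, Nat.find_spec hex⟩
  exact Nat.find_min hex hj fun j' hj' ↦ hlt.trans_le (hb hj')

lemma exists_closedBall_subset_closedPiece (hb : Monotone b) {x c : ℝ} (hx : ∀ j, c ≤ |x - b j|) :
    ∃ i, ∀ (b' : Fin n → ℝ) (r : ℝ), (∀ j, |b' j - b j| + r ≤ c) →
      closedBall x r ⊆ closedPiece b' i := by
  obtain ⟨i, hle, hlt⟩ := exists_forall_le_and_forall_lt hb x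
  refine ⟨i, fun b' r hr y hy ↦ ?_⟩
  rw [Real.closedBall_eq_Icc] at hy
  refine ⟨fun j hj ↦ ?_, fun j hj ↦ ?_⟩
  · have hfar := hx j
    rw [abs_of_nonneg (by linarith [hle j hj])] at hfar
    linarith [hr j, le_abs_self (b' j - b j), hy.1]
  · have hfar := hx j
    rw [abs_of_neg (by linarith [hlt j hj])] at hfar
    linarith [hr j, neg_abs_le (b' j - b j), hy.2]

lemma iUnion_closedPiece (hb : Monotone b) : ⋃ i, closedPiece b i = univ := by
  refine eq_univ_of_forall fun x ↦ ?_
  obtain ⟨i, hle, hlt⟩ := exists_forall_le_and_forall_lt hb x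
  exact mem_iUnion.2 ⟨i, hle, fun j hj ↦ (hlt j hj).le⟩

lemma isClosed_closedPiece (b : Fin n → ℝ) (i : Fin (n + 1)) : IsClosed (closedPiece b i) := by
  simp only [closedPiece, ofPred_and, ofPred_forall]
  exact (isClosed_iInter fun _ ↦ isClosed_iInter fun _ ↦ isClosed_Ici).inter
    (isClosed_iInter fun _ ↦ isClosed_iInter fun _ ↦ isClosed_Iic)

lemma Icc_sub_subset_closedPiece {e : ℝ} (he : 0 ≤ e)
    (hsep : ∀ j j', j < j' → e ≤ b j' - b j) (j : Fin n) :
    Icc (b j - e) (b j) ⊆ closedPiece b j.castSucc := by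
  refine fun x hx ↦ ⟨fun j' hj' ↦ ?_, fun j' hj' ↦ ?_⟩
  · linarith [hsep j' j hj', hx.1]
  · obtain rfl | hlt := eq_or_lt_of_le (show j ≤ j' from hj')
    · exact hx.2
    · linarith [hsep j j' hlt, hx.2]

lemma Icc_add_subset_closedPiece {e : ℝ} (he : 0 ≤ e)
    (hsep : ∀ j j', j < j' → e ≤ b j' - b j) (j : Fin n) :
    Icc (b j) (b j + e) ⊆ closedPiece b j.succ := by
  refine fun x hx ↦ ⟨fun j' hj' ↦ ?_, fun j' hj' ↦ ?_⟩
  · obtain rfl | hlt := eq_or_lt_of_le (show j' ≤ j from Nat.lt_succ_iff.1 hj')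
    · exact hx.1
    · linarith [hsep j' j hlt, hx.1]
  · linarith [hsep j j' (Nat.succ_le_iff.1 hj'), hx.2]

namespace IsPiecewiseAffine

lemma image_eq (hf : IsPiecewiseAffine f b ρ t) {i : Fin (n + 1)} {A : Set ℝ}
    (hA : A ⊆ closedPiece b i) : f '' A = (t i + ·) '' ((ρ i * ·) '' A) := by
  rw [image_image]
  exact image_congr fun x hx ↦ by rw [hf i x (hA hx), add_comm]

lemma diam_image (hf : IsPiecewiseAffine f b ρ t) {i : Fin (n + 1)} {A : Set ℝ}
    (hA : A ⊆ closedPiece b i) : diam (f '' A) = |ρ i| * diam A := by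
  rw [hf.image_eq hA, (isometry_add_left (t i)).diam_image]
  exact diam_smul₀ (ρ i) A

open scoped Pointwise in
lemma volume_image (hf : IsPiecewiseAffine f b ρ t) {i : Fin (n + 1)} {A : Set ℝ}
    (hA : A ⊆ closedPiece b i) : volume (f '' A) = ENNReal.ofReal |ρ i| * volume A := by
  rw [hf.image_eq hA, image_add_left, measure_preimage_add]
  change volume (ρ i • A) = _
  simp [Measure.addHaar_smul]

lemma mul_volume_le (hb : Monotone b) (hf : IsPiecewiseAffine f b ρ t) {c : ℝ}
    (hc : ∀ i, c ≤ |ρ i|) (A : Set ℝ) :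
    ENNReal.ofReal c * volume A ≤ (n + 1) * volume (f '' A) := by
  calc ENNReal.ofReal c * volume A
      = ENNReal.ofReal c * volume (⋃ i, A ∩ closedPiece b i) := by
        rw [← inter_iUnion, iUnion_closedPiece hb, inter_univ]
    _ ≤ ∑ i, ENNReal.ofReal c * volume (A ∩ closedPiece b i) := by
        rw [← Finset.mul_sum]
        gcongr
        exact measure_iUnion_fintype_le _ _
    _ ≤ ∑ _i : Fin (n + 1), volume (f '' A) := by
        refine Finset.sum_le_sum fun i _ ↦ ?_
        grw [hc i, ← hf.volume_image inter_subset_right, inter_subset_left]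
    _ = (n + 1) * volume (f '' A) := by simp

lemma continuous (hb : Monotone b) (hf : IsPiecewiseAffine f b ρ t) : Continuous f := by
  refine (locallyFinite_of_finite (closedPiece b)).continuous (iUnion_closedPiece hb)
    (isClosed_closedPiece b) fun i ↦ ContinuousOn.congr ?_ (hf i)
  fun_prop

lemma lipschitzWith (hb : Monotone b) (hf : IsPiecewiseAffine f b ρ t)
    {K : ℝ≥0} (hK : ∀ i, |ρ i| ≤ K) : LipschitzWith K f := by
  choose i hle hlt using exists_forall_le_and_forall_lt hb
  have hderiv (x : ℝ) : HasDerivWithinAt f (ρ (i x)) (Ici x) x := by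
    have hafter : ∀ᶠ y in nhdsWithin x (Ici x), ∀ j : Fin n, (i x : ℕ) ≤ j → y ≤ b j :=
      eventually_all.2 fun j ↦ eventually_imp_distrib_left.2 fun hj ↦
        ((eventually_lt_nhds (hlt x j hj)).mono fun _ ↦ le_of_lt).filter_mono nhdsWithin_le_nhds
    have heq : f =ᶠ[nhdsWithin x (Ici x)] fun y ↦ ρ (i x) * y + t (i x) := by
      filter_upwards [hafter, self_mem_nhdsWithin] with y hy hxy
      exact hf _ y ⟨fun j hj ↦ (hle x j hj).trans hxy, hy⟩
    have haff : HasDerivAt (fun y ↦ ρ (i x) * y + t (i x)) (ρ (i x)) x := by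
      simpa using ((hasDerivAt_id x).const_mul (ρ (i x))).add_const (t (i x))
    exact haff.hasDerivWithinAt.congr_of_eventuallyEq_of_mem heq self_mem_Ici
  refine LipschitzWith.of_dist_le_mul fun x y ↦ ?_
  wlog hxy : y ≤ x generalizing x y
  · rw [dist_comm, dist_comm x]
    exact this y x (le_of_not_ge hxy)
  have := norm_image_sub_le_of_norm_deriv_right_le_segment (hf.continuous hb).continuousOn
    (fun z _ ↦ hderiv z) (fun z _ ↦ hK (i z)) x ⟨hxy, le_rfl⟩
  rwa [Real.dist_eq, Real.dist_eq, abs_of_nonneg (sub_nonneg.2 hxy)]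

lemma second_difference_eq_zero (hf : IsPiecewiseAffine f b ρ t) {i : Fin (n + 1)} {x e : ℝ}
    (he : 0 ≤ e) (h : closedBall x e ⊆ closedPiece b i) :
    f (x - e) + f (x + e) - 2 * f x = 0 := by
  rw [Real.closedBall_eq_Icc] at h
  rw [hf i (x - e) (h ⟨by linarith, by linarith⟩), hf i (x + e) (h ⟨by linarith, by linarith⟩),
    hf i x (h ⟨by linarith, by linarith⟩)]
  ring

lemma second_difference_breakpoint (hf : IsPiecewiseAffine f b ρ t) {e : ℝ} (he : 0 ≤ e)
    (hsep : ∀ j j', j < j' → e ≤ b j' - b j) (j : Fin n) :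
    f (b j - e) + f (b j + e) - 2 * f (b j) = e * (ρ j.succ - ρ j.castSucc) := by
  have hleft := Icc_sub_subset_closedPiece he hsep j
  have hright := Icc_add_subset_closedPiece he hsep j
  have h₁ := hf _ _ (hleft ⟨le_rfl, by linarith⟩)
  have h₂ := hf _ _ (hleft ⟨by linarith, le_rfl⟩)
  have h₃ := hf _ _ (hright ⟨le_rfl, by linarith⟩)
  have h₄ := hf _ _ (hright ⟨by linarith, le_rfl⟩)
  linear_combination h₁ - h₂ - h₃ + h₄

lemma exists_breakpoint_close {n' : ℕ} {b' : Fin n' → ℝ} {ρ' t' : Fin (n' + 1) → ℝ}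
    (hf : IsPiecewiseAffine f b ρ t) (hg : IsPiecewiseAffine g b' ρ' t') (hb' : Monotone b')
    {e δ : ℝ} (he : 0 ≤ e) (hsep : ∀ j j', j < j' → e ≤ b j' - b j) {j : Fin n}
    (hδ : 4 * δ ≤ e * |ρ j.succ - ρ j.castSucc|) (hfg : ∀ x, |f x - g x| < δ) :
    ∃ j', |b j - b' j'| < e := by
  by_contra! hfar
  obtain ⟨i, hi⟩ := exists_closedBall_subset_closedPiece hb' hfar
  have hzero := hg.second_difference_eq_zero he (hi b' e (by simp))
  have hkink : |f (b j - e) + f (b j + e) - 2 * f (b j)| = e * |ρ j.succ - ρ j.castSucc| := by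
    rw [hf.second_difference_breakpoint he hsep, abs_mul, abs_of_nonneg he]
  rw [← hkink, le_abs'] at hδ
  have h₁ := abs_lt.1 (hfg (b j - e))
  have h₂ := abs_lt.1 (hfg (b j))
  have h₃ := abs_lt.1 (hfg (b j + e))
  rcases hδ with hδ | hδ <;> linarith

end IsPiecewiseAffine

lemma abs_sub_lt_of_forall_exists {b' : Fin n → ℝ} {e : ℝ}
    (hsep : ∀ j j', j < j' → 2 * e ≤ b j' - b j)
    (hb' : StrictMono b') (h : ∀ j, ∃ j', |b j - b' j'| < e) (j : Fin n) : |b j - b' j| < e := by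
  choose φ hφ using h
  have hmono : StrictMono φ := fun i j hij ↦ hb'.lt_iff_lt.1 <| by
    linarith [abs_lt.1 (hφ i), abs_lt.1 (hφ j), hsep i j hij]
  simpa [hmono.eq_id] using hφ j

end PiecewiseAffine

namespace CPLIFS

variable {m : ℕ} {l : Fin m → ℕ} {F G : CPLIFS m l}

section AffinePieces

lemma J_nonempty (F : CPLIFS m l) (k : Fin m) (i : Fin (l k + 1)) : (F.J k i).Nonempty := by
  obtain ⟨z, hlo, hhi⟩ := Order.exists_between_finsets
    (lo := (Finset.univ.filter fun j : Fin (l k) ↦ (j : ℕ) < i).image (F.b k))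
    (hi := (Finset.univ.filter fun j : Fin (l k) ↦ (i : ℕ) ≤ j).image (F.b k)) (by
      simp only [Finset.forall_mem_image, Finset.mem_filter_univ]
      exact fun j hj j' hj' ↦ F.hb k (Fin.lt_def.2 (hj.trans_le hj')))
  simp only [Finset.forall_mem_image, Finset.mem_filter_univ] at hlo hhi
  exact ⟨z, @hlo, @hhi⟩

lemma closedPiece_subset_closure_J (F : CPLIFS m l) (k : Fin m) (i : Fin (l k + 1)) :
    closedPiece (F.b k) i ⊆ closure (F.J k i) := by
  intro x hx
  obtain ⟨z, hz⟩ := F.J_nonempty k i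
  refine closure_mono ?_ (closure_openSegment (𝕜 := ℝ) x z ▸ left_mem_segment ℝ x z)
  rintro _ ⟨a, c, ha, hc, hac, rfl⟩
  have hcomb (y : ℝ) : y = a * y + c * y := by rw [← add_mul, hac, one_mul]
  simp only [smul_eq_mul]
  refine ⟨fun j hj ↦ ?_, fun j hj ↦ ?_⟩
  · nlinarith [hcomb (F.b k j), hx.1 j hj, hz.1 j hj]
  · nlinarith [hcomb (F.b k j), hx.2 j hj, hz.2 j hj]

lemma isPiecewiseAffine (F : CPLIFS m l) (k : Fin m) :
    IsPiecewiseAffine (F.f k) (F.b k) (F.ρ k) (F.t k) := by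
  intro i x hx
  have hJ : EqOn (F.f k) (fun y ↦ F.ρ k i * y + F.t k i) (F.J k i) :=
    fun y hy ↦ F.haff k i y hy.1 hy.2
  exact hJ.closure (F.hcont k) (by fun_prop) (F.closedPiece_subset_closure_J k i hx)

lemma exists_lipschitzWith (F : CPLIFS m l) :
    ∃ K : ℝ≥0, K < 1 ∧ ∀ k, LipschitzWith K (F.f k) := by
  refine ⟨Finset.univ.sup fun p : Idx m l ↦ ‖F.ρ p.1 p.2‖₊,
    (Finset.sup_lt_iff zero_lt_one).2 fun p _ ↦ F.hρ1 p.1 p.2, fun k ↦ ?_⟩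
  refine (F.isPiecewiseAffine k).lipschitzWith (F.hb k).monotone fun i ↦ ?_
  exact NNReal.coe_le_coe.2
    (Finset.le_sup (f := fun p : Idx m l ↦ ‖F.ρ p.1 p.2‖₊) (Finset.mem_univ ⟨k, i⟩))

lemma lipschitzWith_one (F : CPLIFS m l) (k : Fin m) : LipschitzWith 1 (F.f k) :=
  let ⟨_, hK, hlip⟩ := F.exists_lipschitzWith
  (hlip k).weaken hK.le

end AffinePieces

section CylinderLengths

lemma exists_suppInt_f_eq_Icc (F : CPLIFS m l) : ∃ α β, α < β ∧ suppInt F.f = Icc α β :=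
  let ⟨_, hK, hlip⟩ := F.exists_lipschitzWith
  exists_suppInt_eq_Icc hK hlip

lemma isBounded_suppInt (F : CPLIFS m l) : Bornology.IsBounded (suppInt F.f) := by
  obtain ⟨α, β, -, hI⟩ := F.exists_suppInt_f_eq_Icc
  exact hI ▸ isBounded_Icc α β

lemma exists_cylInterval_eq_Icc (F : CPLIFS m l) (w : List (Fin m)) :
    ∃ x y, cylInterval F.f w = Icc x y := by
  obtain ⟨α, β, hαβ, hI⟩ := F.exists_suppInt_f_eq_Icc
  have hcont := (lipschitzWith_compFam F.lipschitzWith_one w).continuous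
  rw [cylInterval, hI]
  exact ⟨_, _, eq_Icc_of_connected_compact ((isConnected_Icc hαβ.le).image _ hcont.continuousOn)
    (isCompact_Icc.image hcont)⟩

lemma isBounded_cylInterval (F : CPLIFS m l) (w : List (Fin m)) :
    Bornology.IsBounded (cylInterval F.f w) := by
  obtain ⟨x, y, h⟩ := F.exists_cylInterval_eq_Icc w
  exact h ▸ isBounded_Icc x y

lemma volume_cylInterval (F : CPLIFS m l) (w : List (Fin m)) :
    volume (cylInterval F.f w) = ENNReal.ofReal (cylLen F.f w) := by
  obtain ⟨x, y, h⟩ := F.exists_cylInterval_eq_Icc w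
  rw [cylLen, h, Real.volume_Icc]
  rcases le_total x y with hxy | hxy
  · rw [Real.diam_Icc hxy]
  · rw [diam_subsingleton (subsingleton_Icc_of_ge hxy),
      ENNReal.ofReal_of_nonpos (sub_nonpos.2 hxy), ENNReal.ofReal_zero]

lemma cylLen_cons_le (F : CPLIFS m l) (k : Fin m) (w : List (Fin m)) :
    cylLen F.f (k :: w) ≤ cylLen F.f w := by
  rw [cylLen, cylLen, cylInterval, image_compFam_cons]
  simpa [cylInterval] using (F.lipschitzWith_one k).diam_image_le _ (F.isBounded_cylInterval w)

lemma cylLen_le_cylLen_nil (F : CPLIFS m l) (w : List (Fin m)) :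
    cylLen F.f w ≤ cylLen F.f [] := by
  induction w with
  | nil => rfl
  | cons k w ih => exact (F.cylLen_cons_le k w).trans ih

lemma cylLen_cons_of_subset {k : Fin m} {w : List (Fin m)} {i : Fin (l k + 1)}
    (h : cylInterval F.f w ⊆ closedPiece (F.b k) i) :
    cylLen F.f (k :: w) = |F.ρ k i| * cylLen F.f w := by
  rw [cylLen, cylInterval, image_compFam_cons]
  exact (F.isPiecewiseAffine k).diam_image h

/-- `exp (-b)` bounds from below the factor by which a map of the system can shrink an interval:
`f k` folds an interval at most `l k + 1` times, and contracts it by some `|ρ k i|` in between. -/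
def IsShrinkBound (F : CPLIFS m l) (b : ℝ) : Prop :=
  ∀ k i, (l k + 1 : ℝ) ≤ Real.exp b * |F.ρ k i|

lemma exists_isShrinkBound (F : CPLIFS m l) : ∃ b, 0 ≤ b ∧ F.IsShrinkBound b := by
  obtain ⟨b, hb⟩ := Finite.exists_le fun p : Idx m l ↦ Real.log ((l p.1 + 1) / |F.ρ p.1 p.2|)
  refine ⟨max b 0, le_max_right _ _, fun k i ↦ ?_⟩
  have hρ := abs_pos.2 (F.hρ0 k i)
  rw [← div_le_iff₀ hρ, ← Real.log_le_iff_le_exp (by positivity)]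
  exact (hb ⟨k, i⟩).trans (le_max_left _ _)

lemma abs_slope_le_exp_mul {δ : ℝ} {k : Fin m} {i : Fin (l k + 1)}
    (h : abs (Real.log |F.ρ k i| - Real.log |G.ρ k i|) < δ) :
    |F.ρ k i| ≤ Real.exp δ * |G.ρ k i| := by
  have hF := abs_pos.2 (F.hρ0 k i)
  have hG := abs_pos.2 (G.hρ0 k i)
  rw [← div_le_iff₀ hG, ← Real.log_le_iff_le_exp (div_pos hF hG), Real.log_div hF.ne' hG.ne']
  exact (lt_of_abs_lt h).le

lemma IsShrinkBound.of_close {b δ : ℝ} (hb : F.IsShrinkBound b)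
    (h : ∀ k i, abs (Real.log |F.ρ k i| - Real.log |G.ρ k i|) < δ) : G.IsShrinkBound (b + δ) := by
  intro k i
  calc (l k + 1 : ℝ) ≤ Real.exp b * |F.ρ k i| := hb k i
    _ ≤ Real.exp b * (Real.exp δ * |G.ρ k i|) := by grw [abs_slope_le_exp_mul (h k i)]
    _ = Real.exp (b + δ) * |G.ρ k i| := by rw [Real.exp_add, mul_assoc]

lemma IsShrinkBound.exp_neg_mul_cylLen_le {b : ℝ} (hb : F.IsShrinkBound b) (k : Fin m)
    (w : List (Fin m)) : Real.exp (-b) * cylLen F.f w ≤ cylLen F.f (k :: w) := by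
  have hslope (i : Fin (l k + 1)) : Real.exp (-b) * (l k + 1) ≤ |F.ρ k i| := by
    rw [Real.exp_neg, inv_mul_le_iff₀ (Real.exp_pos b)]
    exact hb k i
  have hvol := (F.isPiecewiseAffine k).mul_volume_le (F.hb k).monotone hslope (cylInterval F.f w)
  have himage : F.f k '' cylInterval F.f w = cylInterval F.f (k :: w) :=
    (image_compFam_cons F.f k w _).symm
  have hlk : (l k + 1 : ENNReal) = ENNReal.ofReal (l k + 1) := by
    rw [ENNReal.ofReal_add (by positivity) zero_le_one]; simp
  rw [himage, F.volume_cylInterval, F.volume_cylInterval, hlk,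
    ← ENNReal.ofReal_mul (by positivity), ← ENNReal.ofReal_mul (by positivity),
    ENNReal.ofReal_le_ofReal_iff (by unfold cylLen; positivity)] at hvol
  refine le_of_mul_le_mul_left ?_ (show (0 : ℝ) < l k + 1 by positivity)
  linarith

lemma cylLen_pos (F : CPLIFS m l) (w : List (Fin m)) : 0 < cylLen F.f w := by
  induction w with
  | nil =>
    obtain ⟨α, β, hαβ, hI⟩ := F.exists_suppInt_f_eq_Icc
    simpa [cylLen, cylInterval, compFam, hI, Real.diam_Icc hαβ.le] using hαβ
  | cons k w ih =>
    obtain ⟨b, -, hb⟩ := F.exists_isShrinkBound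
    exact (mul_pos (Real.exp_pos _) ih).trans_le (hb.exp_neg_mul_cylLen_le k w)

lemma IsShrinkBound.log_cylLen_le_add {b : ℝ} (hb : F.IsShrinkBound b) (k : Fin m)
    (w : List (Fin m)) : Real.log (cylLen F.f w) ≤ Real.log (cylLen F.f (k :: w)) + b := by
  have := Real.log_le_log (mul_pos (Real.exp_pos _) (F.cylLen_pos w)) (hb.exp_neg_mul_cylLen_le k w)
  rw [Real.log_mul (Real.exp_pos _).ne' (F.cylLen_pos w).ne', Real.log_exp] at this
  linarith

lemma IsShrinkBound.sub_mul_length_le_log_cylLen {b : ℝ} (hb : F.IsShrinkBound b)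
    (w : List (Fin m)) :
    Real.log (cylLen F.f []) - b * w.length ≤ Real.log (cylLen F.f w) := by
  induction w with
  | nil => simp
  | cons k w ih =>
    rw [List.length_cons, Nat.cast_succ]
    linarith [hb.log_cylLen_le_add k w]

end CylinderLengths

section BreakPoints

/-- No break point of a map `f k` is fixed by a composition of maps of the system which starts by
applying `f k` (and which therefore is the last letter of the word). -/
def BreaksNonperiodic (F : CPLIFS m l) : Prop :=
  ∀ k j v, compFam F.f (v ++ [k]) (F.b k j) ≠ F.b k j

lemma b_mem_closedPiece_castSucc (F : CPLIFS m l) (k : Fin m) (j : Fin (l k)) :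
    F.b k j ∈ closedPiece (F.b k) j.castSucc :=
  Icc_sub_subset_closedPiece le_rfl (fun _ _ h ↦ sub_nonneg.2 ((F.hb k).monotone h.le)) j
    (by simp)

lemma b_mem_closedPiece_succ (F : CPLIFS m l) (k : Fin m) (j : Fin (l k)) :
    F.b k j ∈ closedPiece (F.b k) j.succ :=
  Icc_add_subset_closedPiece le_rfl (fun _ _ h ↦ sub_nonneg.2 ((F.hb k).monotone h.le)) j
    (by simp)

lemma exists_compFam_eq_compFam_S (F : CPLIFS m l) (v : List (Fin m)) (x : ℝ) :
    ∃ p : List (Idx m l), compFam F.f v x = compFam F.S p x := by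
  induction v with
  | nil => exact ⟨[], rfl⟩
  | cons k v ih =>
    obtain ⟨p, hp⟩ := ih
    obtain ⟨i, hi⟩ := mem_iUnion.1
      ((iUnion_closedPiece (F.hb k).monotone).symm ▸ mem_univ (compFam F.f v x))
    exact ⟨⟨k, i⟩ :: p, (F.isPiecewiseAffine k i _ hi).trans (by rw [hp]; rfl)⟩

lemma breaksNonperiodic_of_noExactOverlap (hno : NoExactOverlap F.S) : F.BreaksNonperiodic := by
  intro k j v hfix
  obtain ⟨p, hp⟩ := F.exists_compFam_eq_compFam_S v (F.f k (F.b k j))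
  have hlift (i : Fin (l k + 1)) (hi : F.b k j ∈ closedPiece (F.b k) i) :
      compFam F.S (p ++ [⟨k, i⟩]) (F.b k j) = F.b k j := by
    rw [compFam_append] at hfix ⊢
    change compFam F.S p (F.ρ k i * F.b k j + F.t k i) = _
    rw [← F.isPiecewiseAffine k i _ hi, ← hp]
    exact hfix
  have heq := hno.eq_of_common_fixedPoint (fun q ↦ ⟨F.ρ q.1 q.2, F.t q.1 q.2, fun _ ↦ rfl⟩)
    (by simp) (hlift _ (F.b_mem_closedPiece_castSucc k j)) (hlift _ (F.b_mem_closedPiece_succ k j))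
  simp [Fin.ext_iff] at heq

/-- The word `u` starts with `q.1`, and the part of the composition `f_u` applied before that last
map sends `x₀` to within `c` of the break point `q` of that map. -/
def NearBreakAt (F : CPLIFS m l) (x₀ c : ℝ) (q : Σ k, Fin (l k)) (u : List (Fin m)) : Prop :=
  ∃ w, u = q.1 :: w ∧ |compFam F.f w x₀ - F.b q.1 q.2| ≤ c

lemma BreaksNonperiodic.exists_lt_abs_sub (hF : F.BreaksNonperiodic) (N : ℕ) :
    ∃ c > 0, ∀ v : List (Fin m), v.length ≤ N → ∀ q : Σ k, Fin (l k),
      2 * c < |compFam F.f (v ++ [q.1]) (F.b q.1 q.2) - F.b q.1 q.2| := by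
  have hev : ∀ᶠ c : ℝ in nhdsWithin 0 (Ioi 0),
      ∀ v ∈ {v : List (Fin m) | v.length ≤ N}, ∀ q : Σ k, Fin (l k),
      2 * c < |compFam F.f (v ++ [q.1]) (F.b q.1 q.2) - F.b q.1 q.2| := by
    refine (eventually_all_finite (List.finite_length_le _ N)).2 fun v _ ↦
      eventually_all.2 fun q ↦ ?_
    exact eventually_nhdsGT_mul_lt 2 (abs_pos.2 (sub_ne_zero.2 (hF q.1 q.2 v)))
  obtain ⟨c, hc, hcpos⟩ := (hev.and self_mem_nhdsWithin).exists
  exact ⟨c, hcpos, hc⟩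

lemma NearBreakAt.length_add_le {x₀ c : ℝ} {N : ℕ} {q : Σ k, Fin (l k)}
    (hc : ∀ v : List (Fin m), v.length ≤ N →
      2 * c < |compFam F.f (v ++ [q.1]) (F.b q.1 q.2) - F.b q.1 q.2|)
    {u u' : List (Fin m)} (hu : F.NearBreakAt x₀ c q u) (hu' : F.NearBreakAt x₀ c q u')
    (hsuf : u <:+ u') (hne : u ≠ u') : u.length + N ≤ u'.length := by
  obtain ⟨w, rfl, hw⟩ := hu
  obtain ⟨w', rfl, hw'⟩ := hu'
  obtain ⟨v, rfl⟩ : q.1 :: w <:+ w' := (List.suffix_cons_iff.1 hsuf).resolve_left hne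
  by_contra! hlt
  have hlen : v.length ≤ N := by
    simp only [List.length_append, List.length_cons] at hlt
    omega
  have hlip : LipschitzWith 1 (compFam F.f (v ++ [q.1])) := by
    simpa using lipschitzWith_compFam F.lipschitzWith_one (v ++ [q.1])
  -- Between two visits near the break point, `v ++ [q.1]` moves it by at most `2 * c`.
  have hmove := hlip.dist_le_mul (F.b q.1 q.2) (compFam F.f w x₀)
  rw [NNReal.coe_one, one_mul, dist_comm (F.b q.1 q.2), Real.dist_eq, Real.dist_eq,
    ← compFam_append, List.append_assoc, List.singleton_append] at hmove
  have htri := abs_sub_le (compFam F.f (v ++ [q.1]) (F.b q.1 q.2))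
    (compFam F.f (v ++ q.1 :: w) x₀) (F.b q.1 q.2)
  linarith [hc v hlen]

open scoped Classical in
lemma BreaksNonperiodic.exists_sum_countP_nearBreakAt_le (hF : F.BreaksNonperiodic) {θ : ℝ}
    (hθ : 0 < θ) :
    ∃ c > 0, ∃ K : ℝ, ∀ x₀, ∀ w : List (Fin m),
      ∑ q, (w.tails.countP (F.NearBreakAt x₀ c q ·) : ℝ) ≤ K + θ * w.length := by
  set L := Fintype.card (Σ k, Fin (l k))
  obtain ⟨N, hN⟩ := exists_nat_gt (max (L / θ) 0)
  have hNpos : (0 : ℝ) < N := (le_max_right _ _).trans_lt hN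
  have hLN : (L : ℝ) / N ≤ θ := by
    rw [div_le_iff₀ hNpos, mul_comm, ← div_le_iff₀ hθ]
    exact ((le_max_left _ _).trans_lt hN).le
  obtain ⟨c, hcpos, hc⟩ := hF.exists_lt_abs_sub N
  refine ⟨c, hcpos, L, fun x₀ w ↦ ?_⟩
  have hcount (q : Σ k, Fin (l k)) :
      (w.tails.countP (F.NearBreakAt x₀ c q ·) : ℝ) ≤ 1 + w.length / N := by
    have := countP_tails_mul_le (P := F.NearBreakAt x₀ c q)
      (fun u v hu hv ↦ hu.length_add_le (hc · · q) hv) w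
    rw [one_add_div hNpos.ne', le_div_iff₀ hNpos, add_comm (N : ℝ)]
    exact_mod_cast this
  calc ∑ q, (w.tails.countP (F.NearBreakAt x₀ c q ·) : ℝ)
      ≤ ∑ _q : Σ k, Fin (l k), (1 + w.length / N : ℝ) := Finset.sum_le_sum fun q _ ↦ hcount q
    _ = L + L / N * w.length := by
        rw [Finset.sum_const, Finset.card_univ, nsmul_eq_mul]; ring
    _ ≤ L + θ * w.length := by grw [hLN]

lemma exists_forall_abs_b_sub_lt (F : CPLIFS m l) {e : ℝ} (he : 0 < e) :
    ∃ δ > 0, ∀ G : CPLIFS m l, (∀ k x, |F.f k x - G.f k x| < δ) →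
      ∀ k j, |F.b k j - G.b k j| < e := by
  have hsmall : ∀ᶠ r : ℝ in nhdsWithin 0 (Ioi 0),
      ∀ k (j j' : Fin (l k)), j < j' → 2 * r < F.b k j' - F.b k j :=
    eventually_all.2 fun k ↦ eventually_all.2 fun j ↦ eventually_all.2 fun j' ↦
      eventually_imp_distrib_left.2 fun hj ↦ eventually_nhdsGT_mul_lt 2 (sub_pos.2 (F.hb k hj))
  obtain ⟨r, ⟨hsep, hre⟩, (hr : 0 < r)⟩ :=
    ((hsmall.and (eventually_nhdsGT_mul_lt 1 he)).and self_mem_nhdsWithin).exists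
  rw [one_mul] at hre
  have hδsmall : ∀ᶠ δ : ℝ in nhdsWithin 0 (Ioi 0),
      ∀ k (j : Fin (l k)), 4 * δ < r * |F.ρ k j.succ - F.ρ k j.castSucc| :=
    eventually_all.2 fun k ↦ eventually_all.2 fun j ↦ eventually_nhdsGT_mul_lt 4
      (mul_pos hr (abs_pos.2 (sub_ne_zero.2 (F.hconsec k j).symm)))
  obtain ⟨δ, hδ, hδpos⟩ := (hδsmall.and self_mem_nhdsWithin).exists
  refine ⟨δ, hδpos, fun G hFG k j ↦ lt_trans ?_ hre⟩
  refine abs_sub_lt_of_forall_exists (fun j j' hj ↦ (hsep k j j' hj).le) (G.hb k) (fun j ↦ ?_) j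
  exact (F.isPiecewiseAffine k).exists_breakpoint_close (G.isPiecewiseAffine k) (G.hb k).monotone
    hr.le (fun j j' hj ↦ by linarith [hsep k j j' hj]) (hδ k j).le (hFG k)

end BreakPoints

section SplitLetters

/-- A word `k :: w` splits if no linearity pieces of `F.f k` and `G.f k` with a common index
contain the cylinders of `w` for `F` and `G`, so that their lengths may change under the letter `k`
by unrelated factors. -/
def Splits (F G : CPLIFS m l) : List (Fin m) → Prop
  | [] => False
  | k :: w => ∀ i, ¬(cylInterval F.f w ⊆ closedPiece (F.b k) i ∧
      cylInterval G.f w ⊆ closedPiece (G.b k) i)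

lemma exists_length_lt_or_nearBreakAt_of_splits {K : ℝ≥0} (hK : K < 1)
    (hF : ∀ k, LipschitzWith K (F.f k)) {δ c : ℝ} (hδ : 0 ≤ δ) (hδc : δ / (1 - K) < c / 2)
    (hFG : ∀ k x, |F.f k x - G.f k x| ≤ δ) (hb : ∀ k j, |F.b k j - G.b k j| ≤ c / 2) (x₀ : ℝ) :
    ∃ n, ∀ u, F.Splits G u → u.length < n ∨ ∃ q, F.NearBreakAt x₀ c q u := by
  have hc : 0 ≤ c / 2 := (div_nonneg hδ (sub_nonneg.2 (mod_cast hK.le))).trans hδc.le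
  obtain ⟨nF, hnF⟩ := exists_image_compFam_subset_closedBall (T := F.f) hK hF hδ
    (fun k x ↦ (dist_self _).trans_le hδ) hδc F.isBounded_suppInt x₀
  obtain ⟨nG, hnG⟩ := exists_image_compFam_subset_closedBall (T := G.f) hK hF hδ
    hFG hδc G.isBounded_suppInt x₀
  refine ⟨max nF nG + 1, fun u hu ↦ ?_⟩
  rcases u with _ | ⟨k, w⟩
  · exact hu.elim
  by_contra! ⟨hlen, hfar⟩
  rw [List.length_cons, Nat.add_le_add_iff_right, max_le_iff] at hlen
  obtain ⟨i, hi⟩ := exists_closedBall_subset_closedPiece (F.hb k).monotone fun j ↦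
    (not_le.1 fun h ↦ hfar ⟨k, j⟩ ⟨w, rfl, h⟩).le
  refine hu i ⟨(hnF w hlen.1).trans (hi _ _ fun j ↦ ?_), (hnG w hlen.2).trans (hi _ _ fun j ↦ ?_)⟩
  · rw [sub_self, abs_zero]
    linarith
  · rw [abs_sub_comm]
    linarith [hb k j]

open scoped Classical in
lemma BreaksNonperiodic.exists_countP_splits_le (hF : F.BreaksNonperiodic) {θ : ℝ} (hθ : 0 < θ) :
    ∃ δ > 0, ∀ G : CPLIFS m l, (∀ k x, |F.f k x - G.f k x| < δ) →
      ∃ C : ℝ, ∀ w : List (Fin m), (w.tails.countP (F.Splits G ·) : ℝ) ≤ C + θ * w.length := by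
  obtain ⟨K, hK, hlip⟩ := F.exists_lipschitzWith
  have hK' : (0 : ℝ) < 1 - K := sub_pos.2 (mod_cast hK)
  obtain ⟨c, hc, C, hcount⟩ := hF.exists_sum_countP_nearBreakAt_le hθ
  obtain ⟨δ₁, hδ₁, hbreaks⟩ := F.exists_forall_abs_b_sub_lt (half_pos hc)
  obtain ⟨δ, hδ, hδlt⟩ := exists_between (lt_min hδ₁ (mul_pos (half_pos hc) hK'))
  obtain ⟨hδδ₁, hδc⟩ := lt_min_iff.1 hδlt
  refine ⟨δ, hδ, fun G hFG ↦ ?_⟩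
  have hb := hbreaks G fun k x ↦ (hFG k x).trans hδδ₁
  obtain ⟨n, hn⟩ := exists_length_lt_or_nearBreakAt_of_splits hK hlip hδ.le
    ((div_lt_iff₀ hK').2 hδc) (fun k x ↦ (hFG k x).le) (fun k j ↦ (hb k j).le) 0
  refine ⟨n + C, fun w ↦ ?_⟩
  have hle := countP_le_countP_add_sum_countP hn w.tails
  rw [countP_length_lt_tails] at hle
  calc (w.tails.countP (F.Splits G ·) : ℝ)
      ≤ n + ∑ q, (w.tails.countP (F.NearBreakAt 0 c q ·) : ℝ) :=
        mod_cast hle.trans (Nat.add_le_add_right (min_le_left _ _) _)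
    _ ≤ n + C + θ * w.length := by linarith [hcount 0 w]

open scoped Classical in
lemma log_cylLen_le_log_cylLen_add {b δ : ℝ} (hb₀ : 0 ≤ b) (hb : G.IsShrinkBound b) (hδ : 0 ≤ δ)
    (hFG : ∀ k i, abs (Real.log |F.ρ k i| - Real.log |G.ρ k i|) < δ) (w : List (Fin m)) :
    Real.log (cylLen F.f w) - Real.log (cylLen G.f w) ≤
      Real.log (cylLen F.f []) - Real.log (cylLen G.f []) + δ * w.length +
        b * w.tails.countP (F.Splits G ·) := by
  refine le_add_mul_countP_tails (P := F.Splits G)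
    (φ := fun w ↦ Real.log (cylLen F.f w) - Real.log (cylLen G.f w)) hb₀ (fun k w ↦ ?_) w
  split_ifs with hsplit
  · have hFmono := Real.log_le_log (F.cylLen_pos _) (F.cylLen_cons_le k w)
    linarith [hb.log_cylLen_le_add k w]
  · simp only [Splits, not_forall, not_not] at hsplit
    obtain ⟨i, hFi, hGi⟩ := hsplit
    rw [cylLen_cons_of_subset hFi, cylLen_cons_of_subset hGi,
      Real.log_mul (abs_ne_zero.2 (F.hρ0 k i)) (F.cylLen_pos w).ne',
      Real.log_mul (abs_ne_zero.2 (G.hρ0 k i)) (G.cylLen_pos w).ne']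
    linarith [lt_of_abs_lt (hFG k i)]

lemma BreaksNonperiodic.exists_log_cylLen_le (hF : F.BreaksNonperiodic) {ε : ℝ} (hε : 0 < ε) :
    ∃ δ > 0, ∀ G : CPLIFS m l, (∀ k i, abs (Real.log |F.ρ k i| - Real.log |G.ρ k i|) < δ) →
      (∀ k x, |F.f k x - G.f k x| < δ) →
      ∃ C, ∀ w, Real.log (cylLen F.f w) ≤ Real.log (cylLen G.f w) + (C + ε * w.length) := by
  classical
  obtain ⟨b, hb₀, hb⟩ := F.exists_isShrinkBound
  have hb₁ : 0 < b + 1 := by linarith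
  obtain ⟨δ₀, hδ₀, hcount⟩ := hF.exists_countP_splits_le (div_pos (half_pos hε) hb₁)
  refine ⟨min δ₀ (min (ε / 2) 1), by positivity, fun G hslope hdist ↦ ?_⟩
  have hdist₀ (k x) : |F.f k x - G.f k x| < δ₀ := (hdist k x).trans_le (min_le_left _ _)
  have hslope₁ (k i) := (hslope k i).trans_le ((min_le_right _ _).trans (min_le_right _ _))
  have hslope₂ (k i) := (hslope k i).trans_le ((min_le_right _ _).trans (min_le_left _ _))
  obtain ⟨K, hK⟩ := hcount G hdist₀
  refine ⟨Real.log (cylLen F.f []) - Real.log (cylLen G.f []) + (b + 1) * K, fun w ↦ ?_⟩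
  have hlog := log_cylLen_le_log_cylLen_add hb₁.le (hb.of_close hslope₁) (half_pos hε).le hslope₂ w
  have hsplits : (b + 1) * (w.tails.countP (F.Splits G ·) : ℝ) ≤ (b + 1) * K + ε / 2 * w.length :=
    calc (b + 1) * (w.tails.countP (F.Splits G ·) : ℝ)
        ≤ (b + 1) * (K + ε / 2 / (b + 1) * w.length) := by grw [hK w]
      _ = (b + 1) * K + ε / 2 * w.length := by field_simp
  linarith

end SplitLetters

end CPLIFS

theorem pressure_lower_semicontinuous_general {m : ℕ} {l : Fin m → ℕ} {F : CPLIFS m l}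
    (hF : F.BreaksNonperiodic) {ε : ℝ} (hε : 0 < ε) :
    ∃ δ > (0 : ℝ), ∀ G : CPLIFS m l,
      (∀ k i, abs (Real.log |F.ρ k i| - Real.log |G.ρ k i|) < δ) →
      (∀ k x, |F.f k x - G.f k x| < δ) →
      ∀ s, 0 ≤ s → pressure F.f s ≤ pressure G.f s + s * ε := by
  have : NeZero m := ⟨by have := F.hm; omega⟩
  obtain ⟨b, -, hb⟩ := F.exists_isShrinkBound
  obtain ⟨δ, hδ, hlog⟩ := hF.exists_log_cylLen_le hε
  refine ⟨δ, hδ, fun G hslope hdist s hs ↦ ?_⟩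
  obtain ⟨C, hC⟩ := hlog G hslope hdist
  exact pressure_le_pressure_add_mul hs F.cylLen_pos G.cylLen_pos hb.sub_mul_length_le_log_cylLen
    G.cylLen_le_cylLen_nil hC

/-- **Theorem pm80.** Let `F` be a CPLIFS with attractor `Λ` whose generated
self-similar IFS has no exact overlapping, and let `s ∈ (0, dim_H Λ)`.  Then for every
`ε > 0` there is `δ > 0` such that every CPLIFS `G` that is δ-close to `F` satisfies
`Φ(s) - ε < Φ̂(s)`, where `Φ, Φ̂` are the natural pressure functions of `F` and `G`. -/
theorem pressure_lower_semicontinuous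
    {m : ℕ} {l : Fin m → ℕ} (F : CPLIFS m l)
    (Λ : Set ℝ) (hΛne : Λ.Nonempty) (hΛc : IsCompact Λ)
    (hΛinv : Λ = ⋃ k, F.f k '' Λ)
    (hno : NoExactOverlap F.S)
    (s : ℝ) (hs0 : 0 < s) (hs1 : ENNReal.ofReal s < dimH Λ)
    (ε : ℝ) (hε : 0 < ε) :
    ∃ δ > (0 : ℝ), ∀ G : CPLIFS m l, CPLIFS.Close δ F G →
      pressure F.f s - ε < pressure G.f s := by
  obtain ⟨δ, hδ, h⟩ := pressure_lower_semicontinuous_general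
    (CPLIFS.breaksNonperiodic_of_noExactOverlap hno) (div_pos hε (mul_pos two_pos hs0))
  have hsε : s * (ε / (2 * s)) = ε / 2 := by field_simp
  exact ⟨δ, hδ, fun G hG ↦ by linarith [h G hG.2.1 hG.2.2 s hs0.le]⟩

end
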